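/- Let λ = (λ₁, λ₂, 2^{h₂−2}, 1^{h₁−h₂}) with λ₁ ≥ λ₂ ≥ 2, h₁ ≥ h₂ ≥ 2, and |λ| = n. When m = h₁ (the minimum possible maximum entry), the number of quasi-Yamanouchi tableaux of shape λ with maximum entry exactly m equals the number of semistandard Young tableaux of shape λ with entries at most h₁, given by the hook-content formula ∏_{u∈λ} (h₁ + c(u))/h(u). -/

import Mathlib

open YoungDiagram

/-- Entries of `T` are all `< m`.  Entries are 0-based: the value `v` represents the
positive integer `v + 1`, so this says all (1-based) entries are at most `m`. -/
def EntryLE (μ : YoungDiagram) (T : SemistandardYoungTableau μ) (m : ℕ) : Prop :=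
  ∀ i j : ℕ, (i, j) ∈ μ → T i j < m

/-- `T` is quasi-Yamanouchi: whenever a value `v > 0` appears, the leftmost
occurrence of `v` is weakly left of some occurrence of `v - 1`; equivalently some
occurrence of `v` is weakly left of some occurrence of `v - 1`. -/
def IsQY (μ : YoungDiagram) (T : SemistandardYoungTableau μ) : Prop :=
  ∀ v : ℕ, 0 < v → (∃ i j : ℕ, (i, j) ∈ μ ∧ T i j = v) →
    ∃ i j i' j' : ℕ, (i, j) ∈ μ ∧ (i', j') ∈ μ ∧ T i j = v ∧ T i' j' = v - 1 ∧ j ≤ j'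

/-- The maximum (1-based) entry of `T` is exactly `m`: all entries are `< m`
(0-based) and the value `m - 1` appears. -/
def MaxEq (μ : YoungDiagram) (T : SemistandardYoungTableau μ) (m : ℕ) : Prop :=
  EntryLE μ T m ∧ ∃ i j : ℕ, (i, j) ∈ μ ∧ T i j = m - 1

/-- The number of quasi-Yamanouchi tableaux of shape `μ` with maximum entry exactly `m`. -/
noncomputable def QYTeq (μ : YoungDiagram) (m : ℕ) : ℕ :=
  Nat.card {T : SemistandardYoungTableau μ // IsQY μ T ∧ MaxEq μ T m}

/-- The number of semistandard Young tableaux of shape `μ` with entries at most `m`. -/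
noncomputable def SSYTle (μ : YoungDiagram) (m : ℕ) : ℕ :=
  Nat.card {T : SemistandardYoungTableau μ // EntryLE μ T m}

/-- `T` is a standard Young tableau: each of the values `0, …, μ.card - 1`
(representing `1, …, n`) appears exactly once. -/
def IsSYT (μ : YoungDiagram) (T : SemistandardYoungTableau μ) : Prop :=
  ∀ v : ℕ, v < μ.card → ∃! p : ℕ × ℕ, p ∈ μ ∧ T p.1 p.2 = v

/-- The number of standard Young tableaux of shape `μ`. -/
noncomputable def SYTcount (μ : YoungDiagram) : ℕ :=
  Nat.card {T : SemistandardYoungTableau μ // IsSYT μ T}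

/-- The descent set of a standard tableau, in the paper's 1-based labelling:
`d ∈ Des T` iff `1 ≤ d ≤ n - 1` and the (1-based) entry `d + 1` (0-based value `d`)
appears weakly left of the (1-based) entry `d` (0-based value `d - 1`). -/
def Des (μ : YoungDiagram) (T : SemistandardYoungTableau μ) : Set ℕ :=
  {d | 1 ≤ d ∧ d ≤ μ.card - 1 ∧
    ∃ i j i' j' : ℕ, (i, j) ∈ μ ∧ (i', j') ∈ μ ∧ T i j = d ∧ T i' j' = d - 1 ∧ j ≤ j'}

/-- One destandardization step at value `v`: every occurrence of `v` lies strictly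
right of every occurrence of `v - 1` (in particular vacuously if no `v - 1` appears),
and `T'` is obtained from `T` by decrementing every entry equal to `v` to `v - 1`. -/
def StepAt (μ : YoungDiagram) (T T' : SemistandardYoungTableau μ) (v : ℕ) : Prop :=
  0 < v ∧ (∃ i j : ℕ, (i, j) ∈ μ ∧ T i j = v) ∧
    (∀ i j i' j' : ℕ, (i, j) ∈ μ → (i', j') ∈ μ → T i j = v → T i' j' = v - 1 → j' < j) ∧
    (∀ i j : ℕ, (i, j) ∈ μ → T' i j = if T i j = v then v - 1 else T i j)

/-- One destandardization step (at some value). -/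
def Step (μ : YoungDiagram) (T T' : SemistandardYoungTableau μ) : Prop :=
  ∃ v : ℕ, StepAt μ T T' v

/-- `Q` is the destandardization of `T`: it is reachable from `T` by destandardization
steps and no further step applies to it. -/
def IsDst (μ : YoungDiagram) (T Q : SemistandardYoungTableau μ) : Prop :=
  Relation.ReflTransGen (Step μ) T Q ∧ ∀ Q' : SemistandardYoungTableau μ, ¬ Step μ Q Q'

/-- The hook length of the box in row `i`, column `j` of `μ`. -/
def hookLength (μ : YoungDiagram) (i j : ℕ) : ℕ :=
  (μ.rowLen i - j) + (μ.colLen j - i) - 1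

/-- The hook-content product `∏_{u ∈ μ} (k + c(u)) / h(u)` where `c(u)` is the
content (column minus row) and `h(u)` the hook length. -/
noncomputable def hookContent (μ : YoungDiagram) (k : ℕ) : ℚ :=
  ∏ c ∈ μ.cells, ((k : ℚ) + (c.2 : ℚ) - (c.1 : ℚ)) / (hookLength μ c.1 c.2 : ℚ)

/-- `μ` is the partition `(l1, l2, 2^{h2-2}, 1^{h1-h2})`: first row `l1`, second row
`l2`, rows `2, …, h2 - 1` of length `2`, rows `h2, …, h1 - 1` of length `1`, and no
other rows; so the first column has height `h1` and the second column height `h2`. -/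
def HasRows2 (μ : YoungDiagram) (l1 l2 h1 h2 : ℕ) : Prop :=
  μ.rowLen 0 = l1 ∧ μ.rowLen 1 = l2 ∧
    (∀ i : ℕ, 2 ≤ i → i < h2 → μ.rowLen i = 2) ∧
    (∀ i : ℕ, h2 ≤ i → i < h1 → μ.rowLen i = 1) ∧
    (∀ i : ℕ, h1 ≤ i → μ.rowLen i = 0)

/-!
Removing the largest value from a semistandard tableau with entries `< n + 1` leaves a tableau with
entries `< n` whose shape differs from the original one by a horizontal strip. In terms of the
strictly increasing integers `xᵢ = i - μᵢ` this branching rule says that the number `D(x)` of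
tableaux satisfies `D(x₀, …, xₙ) = ∑ D(y₀, …, yₙ₋₁)`, the sum being over `xᵢ ≤ yᵢ < xᵢ₊₁`.
The determinant of binomial coefficients `det (xᵢ choose j)` satisfies the same recursion, by the
hockey-stick identity and multilinearity, and it is the Vandermonde determinant of `x` up to
factorials. For each row, the hook lengths and the differences `xₖ - xᵢ` with `k > i` together are
exactly `1, …, μᵢ + n - 1 - i`, which turns the Vandermonde product into the hook-content product.

When `m` is the number of rows of `μ`, column strictness forces the first column of a tableau with
at most `m` values to be `0, 1, …, m - 1`, so such a tableau is automatically quasi-Yamanouchi with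
maximum entry `m`.
-/

section BinomialDeterminant

open Finset Matrix
open scoped Nat

theorem sum_Ico_ringChoose {a b : ℤ} (h : a ≤ b) (k : ℕ) :
    ∑ y ∈ Ico a b, Ring.choose y k = Ring.choose b (k + 1) - Ring.choose a (k + 1) := by
  induction b, h using Int.leInduction with
  | base => simp
  | succ b hab ih =>
    rw [← sum_Ico_add_eq_sum_Ico_add_one hab, ih, Ring.choose_succ_succ]
    ring

theorem det_sum_rows {ι κ R : Type*} [Fintype ι] [DecidableEq ι] [CommRing R]
    (s : ι → Finset κ) (f : κ → ι → R) :
    det (of fun i j => ∑ y ∈ s i, f y j) =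
      ∑ y ∈ Fintype.piFinset s, det (of fun i j => f (y i) j) := by
  have hrows : (of fun i j => ∑ y ∈ s i, f y j) = fun i => ∑ y ∈ s i, f y := by
    ext i j
    simp only [of_apply, Finset.sum_apply]
  rw [hrows]
  exact (detRowAlternating (n := ι) (R := R)).toMultilinearMap.map_sum_finset (fun _ => f) s

/-- The matrix of binomial coefficients `(vᵢ choose j)`, whose determinant is the Vandermonde
determinant of `v` divided by `∏ j!`. Entries of `v` may be negative, hence `Ring.choose`. -/
def chooseMatrix {n : ℕ} (v : Fin n → ℤ) : Matrix (Fin n) (Fin n) ℤ :=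
  of fun i j => Ring.choose (v i) j

theorem prod_factorial_mul_det_chooseMatrix {n : ℕ} (v : Fin n → ℤ) :
    (∏ j : Fin n, ((j : ℕ)! : ℤ)) * (chooseMatrix v).det = (vandermonde v).det := by
  rw [det_eval_matrixOfPolynomials_eq_det_vandermonde v (fun j => descPochhammer ℤ j)
    (fun j => descPochhammer_natDegree ℤ j) (fun j => monic_descPochhammer ℤ j), ← det_mul_row]
  congr 1
  ext i j
  simp only [chooseMatrix, of_apply]
  rw [← nsmul_eq_mul, ← Ring.descPochhammer_eq_factorial_smul_choose, Polynomial.eval_eq_smeval]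

theorem det_chooseMatrix_succ {n : ℕ} {v : Fin (n + 1) → ℤ} (hv : Monotone v) :
    (chooseMatrix v).det =
      ∑ y ∈ Fintype.piFinset fun i : Fin n => Ico (v i.castSucc) (v i.succ),
        (chooseMatrix y).det := by
  let B : Matrix (Fin (n + 1)) (Fin (n + 1)) ℤ := of <| Fin.cons (chooseMatrix v 0)
    fun i => chooseMatrix v i.succ - chooseMatrix v i.castSucc
  have hB : (chooseMatrix v).det = B.det :=
    det_eq_of_forall_row_eq_smul_add_pred (fun _ => 1) (fun j => by simp [B])
      fun i j => by simp [B]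
  have hB_corner : B 0 0 = 1 := by simp [B, chooseMatrix]
  have hB_column (i : Fin n) : B i.succ 0 = 0 := by simp [B, chooseMatrix]
  have hB_minor : B.submatrix Fin.succ Fin.succ =
      of fun i j : Fin n => ∑ y ∈ Ico (v i.castSucc) (v i.succ), Ring.choose y j := by
    ext i j
    rw [of_apply, sum_Ico_ringChoose (hv Fin.castSucc_lt_succ.le)]
    simp [B, chooseMatrix]
  rw [hB, det_succ_column_zero, Fin.sum_univ_succ,
    Finset.sum_eq_zero fun i _ => by rw [hB_column]; ring, hB_corner]
  simp only [Fin.val_zero, pow_zero, one_mul, add_zero, Fin.succAbove_zero]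
  rw [hB_minor, det_sum_rows _ fun y (j : Fin n) => Ring.choose y (j : ℕ)]
  rfl

end BinomialDeterminant

section RowLengths

open Finset

variable {μ ν : YoungDiagram}

theorem lt_rowLen_iff_lt_colLen {i j : ℕ} : j < μ.rowLen i ↔ i < μ.colLen j := by
  rw [← mem_iff_lt_rowLen, mem_iff_lt_colLen]

theorem colLen_zero_le_iff {n : ℕ} : μ.colLen 0 ≤ n ↔ μ.rowLen n = 0 := by
  rw [← not_lt, ← lt_rowLen_iff_lt_colLen, Nat.pos_iff_ne_zero, not_not]

theorem rowLen_eq_zero_of_colLen_zero_le {i : ℕ} (h : μ.colLen 0 ≤ i) : μ.rowLen i = 0 :=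
  colLen_zero_le_iff.1 h

theorem eq_of_rowLen_eq (h : ∀ i, μ.rowLen i = ν.rowLen i) : μ = ν :=
  SetLike.ext fun ⟨i, _⟩ => by rw [mem_iff_lt_rowLen, mem_iff_lt_rowLen, h i]

theorem exists_rowLen_eq {r : ℕ → ℕ} (hr : Antitone r) {n : ℕ} (hn : r n = 0) :
    ∃ ν : YoungDiagram, ∀ i, ν.rowLen i = r i := by
  let ν : YoungDiagram :=
    { cells := (range n ×ˢ range (r 0)).filter fun c => c.2 < r c.1
      isLowerSet := by
        rintro ⟨i, j⟩ ⟨i', j'⟩ ⟨hi : i' ≤ i, hj : j' ≤ j⟩ hc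
        have := hr hi
        simp only [coe_filter, mem_product, mem_range, Set.mem_ofPred_eq] at hc ⊢
        omega }
  have mem_ν (i j : ℕ) : (i, j) ∈ ν ↔ j < r i := by
    have h0 := hr (Nat.zero_le i)
    have hni (h : n ≤ i) := hr h
    rw [← mem_cells, mem_filter, mem_product, mem_range, mem_range]
    dsimp only
    omega
  exact ⟨ν, fun i => eq_of_forall_lt_iff fun j => by rw [← mem_iff_lt_rowLen, mem_ν]⟩

/-- The integers `xᵢ = i - μᵢ` for the first `n` rows: the beta-numbers of `μ` up to sign and
shift, in increasing order. -/
def shiftedRowLens (n : ℕ) (μ : YoungDiagram) (i : Fin n) : ℤ := (i : ℕ) - μ.rowLen i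

theorem shiftedRowLens_monotone (n : ℕ) (μ : YoungDiagram) : Monotone (shiftedRowLens n μ) := by
  intro i k hik
  have := μ.rowLen_anti i k hik
  have : (i : ℕ) ≤ k := hik
  simp only [shiftedRowLens]
  omega

end RowLengths

section HorizontalStrips

open Finset

variable {μ ν : YoungDiagram}

/-- The skew shape `μ / ν` is a horizontal strip: `ν` is contained in `μ` and `μ / ν` has at most
one box in each column. -/
def IsHorizontalStrip (ν μ : YoungDiagram) : Prop :=
  ν ≤ μ ∧ ∀ i j, (i + 1, j) ∈ μ → (i, j) ∈ ν

theorem isHorizontalStrip_iff_rowLen :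
    IsHorizontalStrip ν μ ↔ ∀ i, μ.rowLen (i + 1) ≤ ν.rowLen i ∧ ν.rowLen i ≤ μ.rowLen i := by
  refine ⟨fun ⟨hle, hstrip⟩ i => ⟨?_, ?_⟩, fun h => ⟨fun ⟨i, j⟩ hc => ?_, fun i j hc => ?_⟩⟩
  · exact le_of_forall_lt fun j hj => mem_iff_lt_rowLen.1 (hstrip i j (mem_iff_lt_rowLen.2 hj))
  · exact le_of_forall_lt fun j hj => mem_iff_lt_rowLen.1 (hle (mem_iff_lt_rowLen.2 hj))
  · exact mem_iff_lt_rowLen.2 ((mem_iff_lt_rowLen.1 hc).trans_le (h i).2)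
  · exact mem_iff_lt_rowLen.2 ((mem_iff_lt_rowLen.1 hc).trans_le (h i).1)

theorem finite_setOf_isHorizontalStrip (μ : YoungDiagram) :
    {ν | IsHorizontalStrip ν μ}.Finite :=
  .of_injOn (f := cells) (t := μ.cells.powerset)
    (fun _ hν => mem_coe.2 (mem_powerset.2 (cells_subset_iff.2 hν.1)))
    (fun _ _ _ _ h => YoungDiagram.ext h) (finite_toSet _)

/-- The finite set of diagrams `ν` obtained from `μ` by removing a horizontal strip. -/
noncomputable def horizontalStrips (μ : YoungDiagram) : Finset YoungDiagram :=
  (finite_setOf_isHorizontalStrip μ).toFinset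

theorem mem_horizontalStrips : ν ∈ horizontalStrips μ ↔ IsHorizontalStrip ν μ :=
  (finite_setOf_isHorizontalStrip μ).mem_toFinset

theorem shiftedRowLens_bijOn {n : ℕ} (hμ : μ.colLen 0 ≤ n + 1) :
    Set.BijOn (shiftedRowLens n) {ν ∈ horizontalStrips μ | ν.colLen 0 ≤ n}
      (Fintype.piFinset fun i : Fin n =>
        Ico (shiftedRowLens (n + 1) μ i.castSucc) (shiftedRowLens (n + 1) μ i.succ)) := by
  refine ⟨fun ν hν => ?_, fun ν hν ν' hν' h => ?_, fun y hy => ?_⟩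
  · have hrow := isHorizontalStrip_iff_rowLen.1 (mem_horizontalStrips.1 hν.1)
    refine mem_coe.2 (Fintype.mem_piFinset.2 fun i => mem_Ico.2 ?_)
    have := hrow i
    simp only [shiftedRowLens, Fin.val_castSucc, Fin.val_succ]
    omega
  · refine eq_of_rowLen_eq fun i => ?_
    rcases lt_or_ge i n with hi | hi
    · have := congrFun h ⟨i, hi⟩
      simp only [shiftedRowLens] at this
      omega
    · rw [rowLen_eq_zero_of_colLen_zero_le (hν.2.trans hi),
        rowLen_eq_zero_of_colLen_zero_le (hν'.2.trans hi)]
  · let r (i : ℕ) : ℕ := if h : i < n then (i - y ⟨i, h⟩).toNat else 0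
    have r_of_lt {i : ℕ} (h : i < n) : (r i : ℤ) = i - y ⟨i, h⟩ ∧
        μ.rowLen (i + 1) ≤ r i ∧ r i ≤ μ.rowLen i := by
      have hyi := mem_Ico.1 (Fintype.mem_piFinset.1 (mem_coe.1 hy) ⟨i, h⟩)
      simp only [shiftedRowLens, Fin.val_castSucc, Fin.val_succ] at hyi
      simp only [r, dif_pos h]
      omega
    have r_of_ge {i : ℕ} (h : n ≤ i) : r i = 0 := dif_neg (not_lt.2 h)
    have hinterlace (i : ℕ) : μ.rowLen (i + 1) ≤ r i ∧ r i ≤ μ.rowLen i := by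
      rcases lt_or_ge i n with hi | hi
      · exact (r_of_lt hi).2
      · rw [r_of_ge hi, rowLen_eq_zero_of_colLen_zero_le (by omega : μ.colLen 0 ≤ i + 1)]
        exact ⟨le_rfl, Nat.zero_le _⟩
    have hr : Antitone r :=
      antitone_nat_of_succ_le fun i => (hinterlace (i + 1)).2.trans (hinterlace i).1
    obtain ⟨ν, hν⟩ := exists_rowLen_eq hr (r_of_ge le_rfl)
    refine ⟨ν, ⟨mem_horizontalStrips.2 (isHorizontalStrip_iff_rowLen.2 fun i => ?_), ?_⟩, ?_⟩
    · rw [hν]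
      exact hinterlace i
    · exact colLen_zero_le_iff.2 ((hν n).trans (r_of_ge le_rfl))
    · ext i
      rw [shiftedRowLens, hν, (r_of_lt i.2).1]
      ring

end HorizontalStrips

section Branching

open Finset

variable {μ ν : YoungDiagram} {n : ℕ}

theorem entry_add_le (T : SemistandardYoungTableau μ) {i j d : ℕ} (h : (i + d, j) ∈ μ) :
    T i j + d ≤ T (i + d) j := by
  induction d with
  | zero => rfl
  | succ d ih =>
    have hprev := ih (μ.up_left_mem (Nat.le_succ _) le_rfl h)
    have hstep : T (i + d) j < T (i + (d + 1)) j := T.col_strict (Nat.lt_succ_self _) h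
    omega

theorem row_le_entry (T : SemistandardYoungTableau μ) {i j : ℕ} (h : (i, j) ∈ μ) :
    i ≤ T i j := by
  have := entry_add_le T (i := 0) (d := i) (by rwa [Nat.zero_add])
  rw [Nat.zero_add] at this
  omega

theorem ssytle_eq_zero (h : n < μ.colLen 0) : SSYTle μ n = 0 := by
  have hcell : (n, 0) ∈ μ := mem_iff_lt_colLen.2 h
  have : IsEmpty {T : SemistandardYoungTableau μ // EntryLE μ T n} :=
    ⟨fun T => (row_le_entry T.1 hcell).not_gt (T.2 n 0 hcell)⟩
  exact Nat.card_of_isEmpty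

theorem ssytle_bot (n : ℕ) : SSYTle ⊥ n = 1 := by
  refine Nat.card_eq_one_iff_unique.2 ⟨⟨fun T T' => Subtype.ext ?_⟩, ⟨default, ?_⟩⟩
  · exact SemistandardYoungTableau.ext fun i j => by
      rw [T.1.zeros (notMem_bot _), T'.1.zeros (notMem_bot _)]
  · exact fun i j h => absurd h (notMem_bot _)

theorem finite_entryLE (μ : YoungDiagram) (n : ℕ) :
    Finite {T : SemistandardYoungTableau μ // EntryLE μ T n} := by
  refine Finite.of_injective (β := μ.cells → Fin n)
    (fun T c => ⟨T.1 c.1.1 c.1.2, T.2 _ _ c.2⟩) fun T T' h => Subtype.ext ?_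
  refine SemistandardYoungTableau.ext fun i j => ?_
  by_cases hc : (i, j) ∈ μ
  · exact congrArg Fin.val (congrFun h ⟨(i, j), hc⟩)
  · rw [T.1.zeros hc, T'.1.zeros hc]

/-- The shape formed by the boxes of `T` with entry `< n`. -/
def shapeBelow (T : SemistandardYoungTableau μ) (n : ℕ) : YoungDiagram where
  cells := μ.cells.filter fun c => T c.1 c.2 < n
  isLowerSet := by
    rintro ⟨i, j⟩ ⟨i', j'⟩ ⟨hi : i' ≤ i, hj : j' ≤ j⟩ hc
    obtain ⟨hmem, hlt⟩ := mem_filter.1 (mem_coe.1 hc)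
    have hmem' : (i', j) ∈ μ := μ.up_left_mem hi le_rfl hmem
    exact mem_coe.2 (mem_filter.2 ⟨μ.up_left_mem hi hj hmem,
      ((T.row_weak_of_le hj hmem').trans (T.col_weak hi hmem)).trans_lt hlt⟩)

theorem mem_shapeBelow {T : SemistandardYoungTableau μ} {i j : ℕ} :
    (i, j) ∈ shapeBelow T n ↔ (i, j) ∈ μ ∧ T i j < n :=
  mem_filter

theorem shapeBelow_isHorizontalStrip {T : SemistandardYoungTableau μ}
    (hT : EntryLE μ T (n + 1)) : IsHorizontalStrip (shapeBelow T n) μ := by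
  refine ⟨fun ⟨i, j⟩ hc => (mem_shapeBelow.1 hc).1, fun i j hc => mem_shapeBelow.2 ⟨?_, ?_⟩⟩
  · exact μ.up_left_mem (Nat.le_succ i) le_rfl hc
  · exact (T.col_strict (Nat.lt_succ_self i) hc).trans_le (Nat.lt_succ_iff.1 (hT _ _ hc))

/-- The restriction of a tableau of shape `μ` to a smaller shape `ν`. -/
def restrictShape (T : SemistandardYoungTableau μ) (h : ν ≤ μ) : SemistandardYoungTableau ν where
  entry i j := if (i, j) ∈ ν then T i j else 0
  row_weak' hj hc := by
    rw [if_pos hc, if_pos (ν.up_left_mem le_rfl hj.le hc)]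
    exact T.row_weak hj (h hc)
  col_strict' hi hc := by
    rw [if_pos hc, if_pos (ν.up_left_mem hi.le le_rfl hc)]
    exact T.col_strict hi (h hc)
  zeros' hc := if_neg hc

theorem restrictShape_apply (T : SemistandardYoungTableau μ) (h : ν ≤ μ) (i j : ℕ) :
    restrictShape T h i j = if (i, j) ∈ ν then T i j else 0 := rfl

/-- The extension of a tableau with entries `< n` by a horizontal strip filled with `n`. -/
def extendByStrip (hν : IsHorizontalStrip ν μ) (T : SemistandardYoungTableau ν)
    (hT : EntryLE ν T n) : SemistandardYoungTableau μ where
  entry i j := if (i, j) ∈ ν then T i j else if (i, j) ∈ μ then n else 0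
  row_weak' {i j₁ j₂} hj hc := by
    rw [if_pos hc, if_pos (μ.up_left_mem le_rfl hj.le hc)]
    by_cases h₂ : (i, j₂) ∈ ν
    · rw [if_pos h₂, if_pos (ν.up_left_mem le_rfl hj.le h₂)]
      exact T.row_weak hj h₂
    · rw [if_neg h₂]
      split_ifs with h₁
      · exact (hT _ _ h₁).le
      · rfl
  col_strict' {i₁ i₂ j} hi hc := by
    have h₁ : (i₁, j) ∈ ν := hν.2 i₁ j (μ.up_left_mem hi le_rfl hc)
    rw [if_pos h₁, if_pos hc]
    split_ifs with h₂
    · exact T.col_strict hi h₂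
    · exact hT _ _ h₁
  zeros' hc := by rw [if_neg fun h => hc (hν.1 h), if_neg hc]

section

variable {hν : IsHorizontalStrip ν μ} {T : SemistandardYoungTableau ν} {hT : EntryLE ν T n}
  {i j : ℕ}

theorem extendByStrip_of_mem (h : (i, j) ∈ ν) : extendByStrip hν T hT i j = T i j :=
  if_pos h

theorem extendByStrip_of_notMem (hc : (i, j) ∈ μ) (h : (i, j) ∉ ν) :
    extendByStrip hν T hT i j = n :=
  (if_neg h).trans (if_pos hc)

theorem extendByStrip_lt_iff (hc : (i, j) ∈ μ) :
    extendByStrip hν T hT i j < n ↔ (i, j) ∈ ν := by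
  by_cases h : (i, j) ∈ ν
  · simpa only [extendByStrip_of_mem h, h, iff_true] using hT i j h
  · simp only [extendByStrip_of_notMem hc h, h, lt_irrefl]

theorem entryLE_extendByStrip : EntryLE μ (extendByStrip hν T hT) (n + 1) := by
  intro i j hc
  by_cases h : (i, j) ∈ ν
  · exact ((extendByStrip_lt_iff hc).2 h).trans (Nat.lt_succ_self n)
  · exact (extendByStrip_of_notMem hc h).trans_lt (Nat.lt_succ_self n)

theorem shapeBelow_extendByStrip : shapeBelow (extendByStrip hν T hT) n = ν :=
  SetLike.ext fun ⟨_, _⟩ => mem_shapeBelow.trans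
    ⟨fun ⟨hc, h⟩ => (extendByStrip_lt_iff hc).1 h,
      fun h => ⟨hν.1 h, (extendByStrip_lt_iff (hν.1 h)).2 h⟩⟩

theorem restrictShape_extendByStrip : restrictShape (extendByStrip hν T hT) hν.1 = T := by
  refine SemistandardYoungTableau.ext fun i j => ?_
  rw [restrictShape_apply]
  split_ifs with h
  · exact extendByStrip_of_mem h
  · exact (T.zeros h).symm

end

theorem entryLE_restrictShape (T : SemistandardYoungTableau μ) (h : shapeBelow T n ≤ μ) :
    EntryLE (shapeBelow T n) (restrictShape T h) n := by
  intro i j hc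
  rw [restrictShape_apply, if_pos hc]
  exact (mem_shapeBelow.1 hc).2

theorem extendByStrip_restrictShape {T : SemistandardYoungTableau μ}
    (hT : EntryLE μ T (n + 1)) (hν : IsHorizontalStrip (shapeBelow T n) μ) :
    extendByStrip hν (restrictShape T hν.1) (entryLE_restrictShape T hν.1) = T := by
  refine SemistandardYoungTableau.ext fun i j => ?_
  by_cases h : (i, j) ∈ shapeBelow T n
  · rw [extendByStrip_of_mem h, restrictShape_apply, if_pos h]
  by_cases hc : (i, j) ∈ μ
  · have hge : n ≤ T i j := not_lt.1 fun hlt => h (mem_shapeBelow.2 ⟨hc, hlt⟩)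
    rw [extendByStrip_of_notMem hc h]
    exact hge.antisymm (Nat.lt_succ_iff.1 (hT i j hc))
  · rw [SemistandardYoungTableau.zeros _ hc, T.zeros hc]

theorem extendByStrip_bijective (μ : YoungDiagram) (n : ℕ) :
    Function.Bijective
      (fun x => ⟨extendByStrip (mem_horizontalStrips.1 x.1.2) x.2.1 x.2.2, entryLE_extendByStrip⟩ :
        (Σ ν : horizontalStrips μ, {T : SemistandardYoungTableau ν // EntryLE ν T n}) →
          {T : SemistandardYoungTableau μ // EntryLE μ T (n + 1)}) := by
  constructor
  · rintro ⟨⟨ν, hν⟩, T, hT⟩ ⟨⟨ν', hν'⟩, T', hT'⟩ h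
    have hval := congrArg Subtype.val h
    obtain rfl : ν = ν' := by
      simpa only [shapeBelow_extendByStrip] using congrArg (shapeBelow · n) hval
    obtain rfl : T = T' := by
      simpa only [restrictShape_extendByStrip] using
        congrArg (restrictShape · (mem_horizontalStrips.1 hν).1) hval
    rfl
  · rintro ⟨T, hT⟩
    have hν := shapeBelow_isHorizontalStrip hT
    exact ⟨⟨⟨_, mem_horizontalStrips.2 hν⟩, _, entryLE_restrictShape T hν.1⟩,
      Subtype.ext (extendByStrip_restrictShape hT hν)⟩

theorem ssytle_succ (μ : YoungDiagram) (n : ℕ) :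
    SSYTle μ (n + 1) = ∑ ν ∈ horizontalStrips μ, SSYTle ν n := by
  have (ν : horizontalStrips μ) := finite_entryLE ν.1 n
  rw [SSYTle, ← Nat.card_eq_of_bijective _ (extendByStrip_bijective μ n), Nat.card_sigma]
  exact sum_coe_sort (horizontalStrips μ) (SSYTle · n)

theorem ssytle_eq_det_chooseMatrix (h : μ.colLen 0 ≤ n) :
    (SSYTle μ n : ℤ) = (chooseMatrix (shiftedRowLens n μ)).det := by
  induction n generalizing μ with
  | zero =>
    obtain rfl : μ = ⊥ := eq_of_rowLen_eq fun i => by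
      rw [rowLen_eq_zero_of_colLen_zero_le (h.trans i.zero_le), eq_comm, ← Nat.le_zero]
      exact not_lt.1 fun hi => notMem_bot _ (mem_iff_lt_rowLen.2 hi)
    rw [ssytle_bot, Matrix.det_fin_zero, Nat.cast_one]
  | succ n ih =>
    calc (SSYTle μ (n + 1) : ℤ)
        = ∑ ν ∈ horizontalStrips μ, (SSYTle ν n : ℤ) := by rw [ssytle_succ, Nat.cast_sum]
      _ = ∑ ν ∈ horizontalStrips μ with ν.colLen 0 ≤ n, (SSYTle ν n : ℤ) :=
          (sum_filter_of_ne fun ν _ hne => not_lt.1 fun hlt =>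
            hne (by rw [ssytle_eq_zero hlt, Nat.cast_zero])).symm
      _ = ∑ y ∈ Fintype.piFinset fun i : Fin n => Ico (shiftedRowLens (n + 1) μ i.castSucc)
            (shiftedRowLens (n + 1) μ i.succ), (chooseMatrix y).det := by
          have hbij := shiftedRowLens_bijOn h
          rw [← coe_filter] at hbij
          exact sum_nbij _ hbij.mapsTo hbij.injOn hbij.surjOn
            fun ν hν => ih (mem_filter.1 hν).2
      _ = (chooseMatrix (shiftedRowLens (n + 1) μ)).det :=
          (det_chooseMatrix_succ (shiftedRowLens_monotone _ μ)).symm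

end Branching

section HookContent

open Finset
open scoped Nat

variable {μ : YoungDiagram} {n i : ℕ}

/-- The difference `(μᵢ - i) - (μₖ - k)` of beta-numbers, arranged so that the subtraction of
natural numbers does not truncate for `i ≤ k`. -/
def rowGap (μ : YoungDiagram) (i k : ℕ) : ℕ := μ.rowLen i + k - (μ.rowLen k + i)

theorem shiftedRowLens_sub {i k : Fin n} (h : i ≤ k) :
    shiftedRowLens n μ k - shiftedRowLens n μ i = rowGap μ i k := by
  have := μ.rowLen_anti i k h
  have : (i : ℕ) ≤ k := h
  simp only [shiftedRowLens, rowGap]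
  omega

theorem det_vandermonde_shiftedRowLens (n : ℕ) (μ : YoungDiagram) :
    (Matrix.vandermonde (shiftedRowLens n μ)).det =
      ∏ i ∈ range n, ∏ k ∈ Ioo i n, (rowGap μ i k : ℤ) := by
  rw [Matrix.det_vandermonde,
    ← Fin.prod_univ_eq_prod_range (fun i => ∏ k ∈ Ioo i n, (rowGap μ i k : ℤ))]
  refine prod_congr rfl fun i _ => ?_
  rw [← Fin.map_valEmbedding_Ioi, prod_map]
  exact prod_congr rfl fun k hk => shiftedRowLens_sub (mem_Ioi.1 hk).le

theorem rowGap_strictMonoOn (μ : YoungDiagram) (i : ℕ) :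
    StrictMonoOn (rowGap μ i) (Set.Ici i) := by
  intro k (hk : i ≤ k) l _ hkl
  have := μ.rowLen_anti _ _ hkl.le
  have := μ.rowLen_anti _ _ hk
  simp only [rowGap]
  omega

theorem hookLength_strictAntiOn (μ : YoungDiagram) (i : ℕ) :
    StrictAntiOn (hookLength μ i) (Set.Iio (μ.rowLen i)) := by
  intro j (_ : j < _) l (hl : l < _) hjl
  have := μ.colLen_anti _ _ hjl.le
  have := lt_rowLen_iff_lt_colLen.1 hl
  simp only [hookLength]
  omega

theorem rowGap_injOn (μ : YoungDiagram) (i n : ℕ) : Set.InjOn (rowGap μ i) (Ioo i n) :=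
  (rowGap_strictMonoOn μ i).injOn.mono fun _ hk => (mem_Ioo.1 (mem_coe.1 hk)).1.le

theorem hookLength_injOn (μ : YoungDiagram) (i : ℕ) :
    Set.InjOn (hookLength μ i) (range (μ.rowLen i)) :=
  (hookLength_strictAntiOn μ i).injOn.mono (coe_range _).subset

theorem hookLength_ne_rowGap {j k : ℕ} (hj : j < μ.rowLen i) (hk : i < k) :
    hookLength μ i j ≠ rowGap μ i k := by
  have := lt_rowLen_iff_lt_colLen.1 hj
  have := μ.rowLen_anti _ _ hk.le
  have := lt_rowLen_iff_lt_colLen (μ := μ) (i := k) (j := j)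
  simp only [hookLength, rowGap]
  omega

theorem disjoint_image_hookLength_image_rowGap (μ : YoungDiagram) (i n : ℕ) :
    Disjoint ((range (μ.rowLen i)).image (hookLength μ i)) ((Ioo i n).image (rowGap μ i)) := by
  simp only [disjoint_left, mem_image, not_exists, not_and]
  rintro _ ⟨j, hj, rfl⟩ k hk heq
  exact hookLength_ne_rowGap (mem_range.1 hj) (mem_Ioo.1 hk).1 heq.symm

theorem image_hookLength_union_image_rowGap (h : μ.colLen 0 ≤ n) (hi : i < n) :
    (range (μ.rowLen i)).image (hookLength μ i) ∪ (Ioo i n).image (rowGap μ i) =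
      Icc 1 (μ.rowLen i + (n - 1 - i)) := by
  refine eq_of_subset_of_card_le (union_subset ?_ ?_) ?_
  · refine image_subset_iff.2 fun j hj => mem_Icc.2 ?_
    have := lt_rowLen_iff_lt_colLen.1 (mem_range.1 hj)
    have := μ.colLen_anti 0 j j.zero_le
    have := mem_range.1 hj
    simp only [hookLength]
    omega
  · refine image_subset_iff.2 fun k hk => mem_Icc.2 ?_
    have := mem_Ioo.1 hk
    have := μ.rowLen_anti i k this.1.le
    simp only [rowGap]
    omega
  · rw [card_union_of_disjoint (disjoint_image_hookLength_image_rowGap μ i n), Nat.card_Icc,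
      card_image_of_injOn (hookLength_injOn μ i), card_image_of_injOn (rowGap_injOn μ i n),
      card_range, Nat.card_Ioo]
    omega

theorem prod_Icc_one_eq_factorial (n : ℕ) : ∏ k ∈ Icc 1 n, k = n ! := by
  rw [← prod_range_add_one_eq_factorial, range_eq_Ico, prod_Ico_add' (fun k => k), zero_add,
    Ico_add_one_right_eq_Icc]

theorem prod_hookLength_mul_prod_rowGap (h : μ.colLen 0 ≤ n) (hi : i < n) :
    (∏ j ∈ range (μ.rowLen i), hookLength μ i j) * ∏ k ∈ Ioo i n, rowGap μ i k =
      (μ.rowLen i + (n - 1 - i))! := by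
  rw [← prod_Icc_one_eq_factorial, ← image_hookLength_union_image_rowGap h hi,
    prod_union (disjoint_image_hookLength_image_rowGap μ i n),
    prod_image (hookLength_injOn μ i), prod_image (rowGap_injOn μ i n)]

theorem factorial_mul_prod_content (L : ℕ) (hi : i < n) :
    ((n - 1 - i)! : ℚ) * ∏ j ∈ range L, ((n : ℚ) + j - i) = (L + (n - 1 - i))! := by
  have hcontent (j : ℕ) : (n : ℚ) + j - i = ((n - 1 - i + 1 + j : ℕ) : ℚ) := by
    rw [show n - 1 - i + 1 + j = n + j - i by omega, Nat.cast_sub (by omega), Nat.cast_add]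
  rw [prod_congr rfl fun j _ => hcontent j, ← Nat.cast_prod, ← Nat.ascFactorial_eq_prod_range,
    ← Nat.cast_mul, Nat.factorial_mul_ascFactorial, Nat.add_comm]

theorem prod_content_div_hookLength_mul_factorial (h : μ.colLen 0 ≤ n) (hi : i < n) :
    (∏ j ∈ range (μ.rowLen i), ((n : ℚ) + j - i) / hookLength μ i j) * (n - 1 - i)! =
      ∏ k ∈ Ioo i n, (rowGap μ i k : ℚ) := by
  have hhook : (∏ j ∈ range (μ.rowLen i), (hookLength μ i j : ℚ)) *
      ∏ k ∈ Ioo i n, (rowGap μ i k : ℚ) = (μ.rowLen i + (n - 1 - i))! := by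
    exact_mod_cast prod_hookLength_mul_prod_rowGap h hi
  have hhook_ne : ∏ j ∈ range (μ.rowLen i), (hookLength μ i j : ℚ) ≠ 0 :=
    left_ne_zero_of_mul (hhook.trans_ne (Nat.cast_ne_zero.2 (Nat.factorial_ne_zero _)))
  rw [prod_div_distrib, div_mul_eq_mul_div, mul_comm, factorial_mul_prod_content _ hi, ← hhook,
    mul_div_cancel_left₀ _ hhook_ne]

theorem prod_cells_eq {M : Type*} [CommMonoid M] (h : μ.colLen 0 ≤ n) (f : ℕ × ℕ → M) :
    ∏ c ∈ μ.cells, f c = ∏ i ∈ range n, ∏ j ∈ range (μ.rowLen i), f (i, j) := by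
  refine prod_finset_product _ _ _ fun ⟨i, j⟩ => ?_
  rw [mem_cells, mem_range, mem_range, mem_iff_lt_rowLen, iff_and_self]
  intro hj
  exact (lt_rowLen_iff_lt_colLen.1 hj).trans_le ((μ.colLen_anti 0 j j.zero_le).trans h)

theorem hookContent_mul_prod_factorial (h : μ.colLen 0 ≤ n) :
    hookContent μ n * ∏ j ∈ range n, (j ! : ℚ) =
      ∏ i ∈ range n, ∏ k ∈ Ioo i n, (rowGap μ i k : ℚ) := by
  rw [hookContent, prod_cells_eq h, ← prod_range_reflect (fun j => (j ! : ℚ)),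
    ← prod_mul_distrib]
  exact prod_congr rfl fun i hi => prod_content_div_hookLength_mul_factorial h (mem_range.1 hi)

theorem ssytle_mul_prod_factorial (h : μ.colLen 0 ≤ n) :
    (SSYTle μ n : ℤ) * ∏ j ∈ range n, (j ! : ℤ) =
      ∏ i ∈ range n, ∏ k ∈ Ioo i n, (rowGap μ i k : ℤ) := by
  rw [ssytle_eq_det_chooseMatrix h, ← det_vandermonde_shiftedRowLens,
    ← prod_factorial_mul_det_chooseMatrix, mul_comm,
    Fin.prod_univ_eq_prod_range (fun j => (j ! : ℤ))]

theorem hookContent_eq_zero (h : n < μ.colLen 0) : hookContent μ n = 0 := by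
  refine prod_eq_zero ((mem_cells _).2 (mem_iff_lt_colLen.2 h)) ?_
  simp only [Nat.cast_zero, add_zero, sub_self, zero_div]

theorem ssytle_eq_hookContent (μ : YoungDiagram) (n : ℕ) :
    (SSYTle μ n : ℚ) = hookContent μ n := by
  rcases lt_or_ge n (μ.colLen 0) with h | h
  · rw [ssytle_eq_zero h, hookContent_eq_zero h, Nat.cast_zero]
  · have hfact : ∏ j ∈ range n, (j ! : ℚ) ≠ 0 :=
      prod_ne_zero_iff.2 fun j _ => Nat.cast_ne_zero.2 j.factorial_ne_zero
    refine mul_right_cancel₀ hfact ?_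
    rw [hookContent_mul_prod_factorial h]
    exact_mod_cast ssytle_mul_prod_factorial h

end HookContent

section QuasiYamanouchi

variable {μ : YoungDiagram} {T : SemistandardYoungTableau μ}

theorem EntryLE.entry_zero_eq (hT : EntryLE μ T (μ.colLen 0)) {i : ℕ} (hi : i < μ.colLen 0) :
    T i 0 = i := by
  obtain ⟨d, hd⟩ := Nat.exists_eq_add_of_lt hi
  have hlast : (i + d, 0) ∈ μ := mem_iff_lt_colLen.2 (by omega)
  have := hT _ _ hlast
  have := entry_add_le T hlast
  have := row_le_entry T (mem_iff_lt_colLen.2 hi)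
  omega

theorem EntryLE.isQY (hT : EntryLE μ T (μ.colLen 0)) : IsQY μ T := by
  rintro v hv ⟨i, j, hij, rfl⟩
  have hlt : T i j < μ.colLen 0 := hT i j hij
  have hlt' : T i j - 1 < μ.colLen 0 := (Nat.sub_le _ _).trans_lt hlt
  exact ⟨T i j, 0, T i j - 1, 0, mem_iff_lt_colLen.2 hlt, mem_iff_lt_colLen.2 hlt',
    hT.entry_zero_eq hlt, hT.entry_zero_eq hlt', le_rfl⟩

theorem EntryLE.maxEq (hT : EntryLE μ T (μ.colLen 0)) (h : 0 < μ.colLen 0) :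
    MaxEq μ T (μ.colLen 0) :=
  have hlast : μ.colLen 0 - 1 < μ.colLen 0 := Nat.sub_one_lt_of_lt h
  ⟨hT, _, 0, mem_iff_lt_colLen.2 hlast, hT.entry_zero_eq hlast⟩

theorem qyteq_colLen_zero_eq_ssytle (h : 0 < μ.colLen 0) :
    QYTeq μ (μ.colLen 0) = SSYTle μ (μ.colLen 0) :=
  Nat.card_congr (Equiv.subtypeEquivRight fun _ =>
    ⟨fun hT => hT.2.1, fun hT => ⟨hT.isQY, hT.maxEq h⟩⟩)

theorem HasRows2.colLen_zero {l1 l2 h1 h2 : ℕ} (hμ : HasRows2 μ l1 l2 h1 h2) (hl2 : 0 < l2)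
    (hh2 : 2 ≤ h2) (hh : h2 ≤ h1) : μ.colLen 0 = h1 := by
  obtain ⟨-, hrow_one, hrow_two, hrow_one_box, hrow_empty⟩ := hμ
  have hlast : 0 < μ.rowLen (h1 - 1) := by
    rcases hh.lt_or_eq with hlt | rfl
    · rw [hrow_one_box (h1 - 1) (by omega) (by omega)]
      exact one_pos
    rcases hh2.lt_or_eq with hlt | rfl
    · rw [hrow_two (h2 - 1) (by omega) (by omega)]
      exact two_pos
    · exact hrow_one ▸ hl2
  have hle : μ.colLen 0 ≤ h1 := colLen_zero_le_iff.2 (hrow_empty h1 le_rfl)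
  have hge := lt_rowLen_iff_lt_colLen.1 hlast
  omega

end QuasiYamanouchi

theorem qyt_min_m_hook_content_general (μ : YoungDiagram) (hμ : 0 < μ.colLen 0) :
    QYTeq μ (μ.colLen 0) = SSYTle μ (μ.colLen 0) ∧
      (SSYTle μ (μ.colLen 0) : ℚ) = hookContent μ (μ.colLen 0) :=
  ⟨qyteq_colLen_zero_eq_ssytle hμ, ssytle_eq_hookContent μ _⟩


/-- for `λ = (λ₁, λ₂, 2^{h₂-2}, 1^{h₁-h₂})` and `m = h₁` (the minimum
possible maximum entry), `QYT_{=h₁}(λ)` equals the number of semistandard Young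
tableaux of shape `λ` with entries at most `h₁`, given by the hook-content formula. -/
theorem qyt_min_m_hook_content (l1 l2 h1 h2 : ℕ)
    (hl2 : 2 ≤ l2) (hl : l2 ≤ l1) (hh2 : 2 ≤ h2) (hh : h2 ≤ h1)
    (μ : YoungDiagram) (hμ : HasRows2 μ l1 l2 h1 h2) :
    QYTeq μ h1 = SSYTle μ h1 ∧ (SSYTle μ h1 : ℚ) = hookContent μ h1 := by
  obtain rfl := hμ.colLen_zero (by omega) hh2 hh
  exact qyt_min_m_hook_content_general μ (by omega)
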